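/- arXiv:2301.13197 — 6 statements merged into one kernel-verified Lean document; each statement's English description precedes it below -/
import Mathlib

section
/- Let n be a natural number and let f : (Fin n → α) → (Fin n → β) be set-equivariant, i.e. for every permutation σ of Fin n and every x : Fin n → α, f (x ∘ σ) = (f x) ∘ σ. Then for every x : Fin n → α and indices i, j with x i = x j, we have f x i = f x j. In particular, a set-equivariant function must always produce the same result at positions holding equal inputs (it cannot break ties). -/
/-- A set-equivariant function on multisets represented as `Fin n → α`
cannot break ties: equal inputs at positions `i` and `j` force equal outputs. -/
theorem set_equivariant_cannot_break_ties {α β : Type*} {n : ℕ}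
    (f : (Fin n → α) → (Fin n → β))
    (hf : ∀ (σ : Equiv.Perm (Fin n)) (x : Fin n → α), f (x ∘ σ) = (f x) ∘ σ) :
    ∀ (x : Fin n → α) (i j : Fin n), x i = x j → f x i = f x j := by
  intro x i j hij
  -- The transposition of `i` and `j` fixes `x`, hence by equivariance it fixes `f x`.
  have hx : x ∘ Equiv.swap i j = x := by
    funext k
    simp only [Function.comp_apply, Equiv.swap_apply_def]
    split_ifs <;> simp_all
  have h := congrFun (hf (Equiv.swap i j) x) i
  rw [hx] at h
  simpa using h
end

section
/- The cross-attention step of slot attention is set-equivariant in the slots. Let Z be an m × d real matrix of slots, X an n × c real matrix of inputs, and W_Q (d × k), W_K (c × k), W_V (c × d') real weight matrices. Define C = (Z W_Q)(X W_K)ᵀ (an m × n matrix), the column-wise softmax M with M_{ij} = exp(C_{ij}) / ∑_{i'} exp(C_{i'j}), the row normalization A with A_{ij} = M_{ij} / ∑_{j'} M_{ij'}, and the slot update U = A (X W_V). If σ is a permutation of Fin m and Z' is defined by Z'_{i·} = Z_{σ(i)·} (permuting the rows of Z by σ), then the corresponding update U' satisfies U'_{i·} = U_{σ(i)·} for all i.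 -/
/-!
Each score `C i j` depends on `Z` only through its `i`-th row, so permuting the slots permutes the
rows of `C`. The softmax denominator of a column sums over all slots and is therefore invariant
under the permutation, while the row normalization and the product with `X * WV` act on each row
separately.
-/

open Matrix BigOperators

/-- The cross-attention step of slot attention is set-equivariant in the slots:
permuting the rows (slots) of `Z` permutes the rows of the slot update `U`
in the same way. -/
theorem slot_attention_update_set_equivariant
    (m n d k c d' : ℕ)
    (Z : Matrix (Fin m) (Fin d) ℝ) (X : Matrix (Fin n) (Fin c) ℝ)
    (WQ : Matrix (Fin d) (Fin k) ℝ) (WK : Matrix (Fin c) (Fin k) ℝ)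
    (WV : Matrix (Fin c) (Fin d') ℝ) (σ : Equiv.Perm (Fin m)) :
    let upd : Matrix (Fin m) (Fin d) ℝ → Matrix (Fin m) (Fin d') ℝ := fun Zmat =>
      let C : Matrix (Fin m) (Fin n) ℝ := (Zmat * WQ) * (X * WK)ᵀ
      let M : Matrix (Fin m) (Fin n) ℝ :=
        Matrix.of fun i j => Real.exp (C i j) / ∑ i', Real.exp (C i' j)
      let A : Matrix (Fin m) (Fin n) ℝ :=
        Matrix.of fun i j => M i j / ∑ j', M i j'
      A * (X * WV)
    ∀ i : Fin m, upd (Matrix.of fun i j => Z (σ i) j) i = upd Z (σ i) := by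
  intro upd i
  have hC : ∀ a j, (((Matrix.of fun i j => Z (σ i) j) * WQ) * (X * WK)ᵀ) a j
      = ((Z * WQ) * (X * WK)ᵀ) (σ a) j := fun a j => rfl
  -- The softmax denominator is a sum over all slots, hence unchanged by reindexing along `σ`.
  have hS : ∀ j, ∑ a, Real.exp (((Z * WQ) * (X * WK)ᵀ) (σ a) j)
      = ∑ a, Real.exp (((Z * WQ) * (X * WK)ᵀ) a j) := fun j =>
    Equiv.sum_comp σ fun a => Real.exp (((Z * WQ) * (X * WK)ᵀ) a j)
  ext l
  simp only [upd]
  rw [Matrix.mul_apply, Matrix.mul_apply]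
  simp only [Matrix.of_apply, hC, hS]
end

section
/- The entropy-regularized optimal transport problem over doubly stochastic matrices has exactly one solution: for every n × n real cost matrix C (n ≥ 1) and every ε > 0, there exists a unique doubly stochastic matrix T minimizing F(T) = ∑_{ij} C_{ij} T_{ij} + ε ∑_{ij} T_{ij} log T_{ij} (with 0 · log 0 = 0) over the set of n × n doubly stochastic matrices. -/
/-!
The doubly stochastic matrices form a nonempty compact convex set, being the closed subset of the
cube `[0, 1]^(n × n)` cut out by linear equations (`isCompact_setOf_isDoublyStochastic`). The
objective is a sum over the entries of `x ↦ c * x + ε * (x * log x)`. Each summand is continuous on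
`ℝ`, also at `0`, so a minimizer exists; each is strictly convex on `[0, ∞)`, also up to `0`, so
the objective is strictly convex on all of the set (`strictConvexOn_otObjective`), boundary
included, and the minimizer is unique.
-/

open BigOperators

/-- An `n × n` real matrix is doubly stochastic if its entries are nonnegative and
all row sums and column sums equal 1. -/
def IsDoublyStochastic {n : ℕ} (T : Matrix (Fin n) (Fin n) ℝ) : Prop :=
  (∀ i j, 0 ≤ T i j) ∧ (∀ i, ∑ j, T i j = 1) ∧ (∀ j, ∑ i, T i j = 1)

/-- The entropy-regularized transport objective, written as one sum over the matrix entries. -/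
noncomputable def otObjective {n : ℕ} (C : Matrix (Fin n) (Fin n) ℝ) (ε : ℝ)
    (T : Matrix (Fin n) (Fin n) ℝ) : ℝ :=
  ∑ i, ∑ j, (C i j * T i j + ε * (T i j * Real.log (T i j)))

lemma otObjective_eq {n : ℕ} (C : Matrix (Fin n) (Fin n) ℝ) (ε : ℝ)
    (T : Matrix (Fin n) (Fin n) ℝ) :
    otObjective C ε T =
      (∑ i, ∑ j, C i j * T i j) + ε * ∑ i, ∑ j, T i j * Real.log (T i j) := by
  simp only [otObjective, Finset.sum_add_distrib, Finset.mul_sum]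

lemma continuous_otObjective {n : ℕ} (C : Matrix (Fin n) (Fin n) ℝ) (ε : ℝ) :
    Continuous (otObjective C ε) := by
  unfold otObjective
  refine continuous_finsetSum _ fun i _ => continuous_finsetSum _ fun j _ => ?_
  have hT : Continuous fun T : Matrix (Fin n) (Fin n) ℝ => T i j := continuous_id.matrix_elem i j
  exact (continuous_const.mul hT).add (continuous_const.mul (Real.continuous_mul_log.comp hT))

lemma isDoublyStochastic_iff_mem {n : ℕ} (T : Matrix (Fin n) (Fin n) ℝ) :
    IsDoublyStochastic T ↔ T ∈ doublyStochastic ℝ (Fin n) :=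
  mem_doublyStochastic_iff_sum.symm

lemma isCompact_setOf_isDoublyStochastic (n : ℕ) :
    IsCompact {T : Matrix (Fin n) (Fin n) ℝ | IsDoublyStochastic T} := by
  have hcube : IsCompact (Set.univ.pi fun _ : Fin n => Set.univ.pi fun _ : Fin n =>
      Set.Icc (0 : ℝ) 1) :=
    isCompact_univ_pi fun _ => isCompact_univ_pi fun _ => isCompact_Icc
  refine hcube.of_isClosed_subset ?_ ?_
  · have hT (i j : Fin n) : Continuous fun T : Matrix (Fin n) (Fin n) ℝ => T i j :=
      continuous_id.matrix_elem i j
    simp only [IsDoublyStochastic, Set.ofPred_and, Set.ofPred_forall]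
    refine IsClosed.inter ?_ (IsClosed.inter ?_ ?_)
    · exact isClosed_iInter fun i => isClosed_iInter fun j =>
        isClosed_le continuous_const (hT i j)
    · exact isClosed_iInter fun i =>
        isClosed_eq (continuous_finsetSum _ fun j _ => hT i j) continuous_const
    · exact isClosed_iInter fun j =>
        isClosed_eq (continuous_finsetSum _ fun i _ => hT i j) continuous_const
  · intro T hT i _ j _
    exact ⟨hT.1 i j, le_one_of_mem_doublyStochastic ((isDoublyStochastic_iff_mem T).1 hT)⟩

lemma convex_setOf_isDoublyStochastic (n : ℕ) :
    Convex ℝ {T : Matrix (Fin n) (Fin n) ℝ | IsDoublyStochastic T} := by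
  simp only [isDoublyStochastic_iff_mem]
  exact convex_doublyStochastic

lemma strictConvexOn_entry (c : ℝ) {ε : ℝ} (hε : 0 < ε) :
    StrictConvexOn ℝ (Set.Ici 0) fun x : ℝ => c * x + ε * (x * Real.log x) := by
  refine ⟨convex_Ici 0, fun x hx y hy hxy a b ha hb hab => ?_⟩
  have h := mul_lt_mul_of_pos_left (Real.strictConvexOn_mul_log.2 hx hy hxy ha hb hab) hε
  simp only [smul_eq_mul] at h ⊢
  linarith

lemma strictConvexOn_otObjective {n : ℕ} (C : Matrix (Fin n) (Fin n) ℝ) {ε : ℝ} (hε : 0 < ε) :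
    StrictConvexOn ℝ {T : Matrix (Fin n) (Fin n) ℝ | IsDoublyStochastic T}
      (otObjective C ε) := by
  refine ⟨convex_setOf_isDoublyStochastic n, fun S hS T hT hST a b ha hb hab => ?_⟩
  -- Every entry satisfies the convexity inequality; it is strict where `S` and `T` differ.
  obtain ⟨i₀, j₀, hne⟩ : ∃ i j, S i j ≠ T i j := by
    by_contra! h
    exact hST (Matrix.ext h)
  have hle (i j : Fin n) :=
    (strictConvexOn_entry (C i j) hε).convexOn.2 (hS.1 i j) (hT.1 i j) ha.le hb.le hab
  have hlt :=
    (strictConvexOn_entry (C i₀ j₀) hε).2 (hS.1 i₀ j₀) (hT.1 i₀ j₀) hne ha hb hab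
  simp only [otObjective, Finset.smul_sum, ← Finset.sum_add_distrib]
  exact Finset.sum_lt_sum (fun i _ => Finset.sum_le_sum fun j _ => hle i j)
    ⟨i₀, Finset.mem_univ _, Finset.sum_lt_sum (fun j _ => hle i₀ j) ⟨j₀, Finset.mem_univ _, hlt⟩⟩

/-- The entropy-regularized optimal transport problem over doubly stochastic
matrices has exactly one solution. -/
theorem entropic_ot_unique_minimizer
    (n : ℕ) (hn : 1 ≤ n) (C : Matrix (Fin n) (Fin n) ℝ) (ε : ℝ) (hε : 0 < ε) :
    ∃! T : Matrix (Fin n) (Fin n) ℝ, IsDoublyStochastic T ∧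
      ∀ T' : Matrix (Fin n) (Fin n) ℝ, IsDoublyStochastic T' →
        (∑ i, ∑ j, C i j * T i j) + ε * ∑ i, ∑ j, T i j * Real.log (T i j)
          ≤ (∑ i, ∑ j, C i j * T' i j)
            + ε * ∑ i, ∑ j, T' i j * Real.log (T' i j) := by
  simp only [← otObjective_eq]
  obtain ⟨T, hT, hmin⟩ := (isCompact_setOf_isDoublyStochastic n).exists_isMinOn
    ⟨1, (isDoublyStochastic_iff_mem _).2 (one_mem _)⟩ (continuous_otObjective C ε).continuousOn
  refine ⟨T, ⟨hT, fun T' hT' => hmin hT'⟩, fun S hS => ?_⟩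
  exact (strictConvexOn_otObjective C hε).eq_of_isMinOn (fun T' hT' => hS.2 T' hT') hmin hS.1 hT
end

section
/- Entropy-regularized optimal transport cannot break ties: let C be an n × n real cost matrix whose rows i and j are equal (C_{ik} = C_{jk} for all k), and let ε > 0. If T is a doubly stochastic matrix minimizing F(T) = ∑_{kl} C_{kl} T_{kl} + ε ∑_{kl} T_{kl} log T_{kl} (with 0 · log 0 = 0) over all n × n doubly stochastic matrices, then rows i and j of T are equal: T_{ik} = T_{jk} for all k. -/
/-!
Let `σ` be the transposition of `i` and `j`, and let `S` be `T` with its rows permuted by `σ`.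
Since rows `i` and `j` of `C` agree, `S` has the same cost and the same entropy as `T`, and the
midpoint `(T + S) / 2` is doubly stochastic with that same cost. By strict convexity of `x log x`
on `[0, ∞)` (`strictConvexOn_mul_log`), the midpoint has a strictly smaller objective as soon as
`T` and `S` differ somewhere, which happens if rows `i` and `j` of `T` differ.
-/

open BigOperators

/-- Entropy-regularized optimal transport cannot break ties: if rows `i` and `j`
of the cost matrix are equal, then the minimizer of the entropy-regularized
objective over doubly stochastic matrices has equal rows `i` and `j`. -/
theorem entropic_ot_cannot_break_ties
    (n : ℕ) (C : Matrix (Fin n) (Fin n) ℝ) (i j : Fin n)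
    (hC : ∀ k, C i k = C j k) (ε : ℝ) (hε : 0 < ε)
    (T : Matrix (Fin n) (Fin n) ℝ) (hT : IsDoublyStochastic T)
    (hopt : ∀ T' : Matrix (Fin n) (Fin n) ℝ, IsDoublyStochastic T' →
      (∑ k, ∑ l, C k l * T k l) + ε * ∑ k, ∑ l, T k l * Real.log (T k l)
        ≤ (∑ k, ∑ l, C k l * T' k l)
          + ε * ∑ k, ∑ l, T' k l * Real.log (T' k l)) :
    ∀ k, T i k = T j k := by
  intro m
  by_contra hne
  obtain ⟨h0, hr, hc⟩ := hT
  let σ : Equiv.Perm (Fin n) := Equiv.swap i j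
  have hσi : σ i = j := Equiv.swap_apply_left i j
  have hCσ : ∀ k l, C k l = C (σ k) l := by
    intro k l
    rcases eq_or_ne k i with rfl | hi
    · rw [hσi, hC]
    · rcases eq_or_ne k j with rfl | hj
      · rw [show σ k = i from Equiv.swap_apply_right i k, hC]
      · rw [show σ k = k from Equiv.swap_apply_of_ne_of_ne hi hj]
  let T' : Matrix (Fin n) (Fin n) ℝ := fun k l => (1 / 2) * T k l + (1 / 2) * T (σ k) l
  have hDS : IsDoublyStochastic T' := by
    refine ⟨fun k l => ?_, fun k => ?_, fun l => ?_⟩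
    · have h1 := h0 k l
      have h2 := h0 (σ k) l
      simp only [T']
      positivity
    · simp only [T', Finset.sum_add_distrib, ← Finset.mul_sum, hr]
      norm_num
    · simp only [T', Finset.sum_add_distrib, ← Finset.mul_sum, hc,
        Equiv.sum_comp σ (fun k => T k l)]
      norm_num
  have hcost : ∑ k, ∑ l, C k l * T' k l = ∑ k, ∑ l, C k l * T k l := by
    have hS : ∑ k, ∑ l, C k l * T (σ k) l = ∑ k, ∑ l, C k l * T k l := by
      rw [← Equiv.sum_comp σ (fun k => ∑ l, C k l * T k l)]
      simp only [← hCσ]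
    have hsplit : ∑ k, ∑ l, C k l * T' k l =
        (1 / 2) * ∑ k, ∑ l, C k l * T k l + (1 / 2) * ∑ k, ∑ l, C k l * T (σ k) l := by
      simp only [Finset.mul_sum, ← Finset.sum_add_distrib, T']
      exact Finset.sum_congr rfl fun k _ => Finset.sum_congr rfl fun l _ => by ring
    rw [hsplit, hS]
    ring
  have hle : ∀ k l, T' k l * Real.log (T' k l) ≤
      (1 / 2) * (T k l * Real.log (T k l)) + (1 / 2) * (T (σ k) l * Real.log (T (σ k) l)) :=
    fun k l => Real.strictConvexOn_mul_log.convexOn.2 (h0 k l) (h0 (σ k) l)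
      (by norm_num) (by norm_num) (by norm_num)
  have hlt : T' i m * Real.log (T' i m) <
      (1 / 2) * (T i m * Real.log (T i m)) + (1 / 2) * (T (σ i) m * Real.log (T (σ i) m)) :=
    Real.strictConvexOn_mul_log.2 (h0 i m) (h0 (σ i) m) (by rwa [hσi])
      (by norm_num) (by norm_num) (by norm_num)
  have hent : ∑ k, ∑ l, T' k l * Real.log (T' k l) < ∑ k, ∑ l, T k l * Real.log (T k l) := by
    calc ∑ k, ∑ l, T' k l * Real.log (T' k l)
        < ∑ k, ∑ l, ((1 / 2) * (T k l * Real.log (T k l))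
            + (1 / 2) * (T (σ k) l * Real.log (T (σ k) l))) :=
          Finset.sum_lt_sum (fun k _ => Finset.sum_le_sum fun l _ => hle k l)
            ⟨i, Finset.mem_univ _, Finset.sum_lt_sum (fun l _ => hle i l)
              ⟨m, Finset.mem_univ _, hlt⟩⟩
      _ = ∑ k, ∑ l, T k l * Real.log (T k l) := by
          simp only [Finset.sum_add_distrib, ← Finset.mul_sum]
          rw [Equiv.sum_comp σ (fun k => ∑ l, T k l * Real.log (T k l))]
          ring
  have h := hopt T' hDS
  rw [hcost] at h
  linarith [mul_lt_mul_of_pos_left hent hε]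
end

section
/- Sinkhorn's theorem (existence of a doubly stochastic scaling): for every n × n real matrix A with all entries strictly positive (n ≥ 1), there exist vectors u, v ∈ ℝ^n with all entries strictly positive such that the matrix with entries u_i · A_{ij} · v_j is doubly stochastic. -/
/-!
Write `P v = (∏ j, v j) / ∏ i, (A v) i` for `v ≥ 0`, `v ≠ 0`. This function is homogeneous of
degree `0`. It is continuous on the standard simplex, where every `(A v) i` is positive because `A`
is positive, so it attains a maximum there; the maximum is positive, hence the maximizer `v` has
positive entries, and by homogeneity it maximizes `P` among all positive vectors
(`exists_maximizer`).

Set `u i = 1 / (A v) i`, so that `T i j = u i * A i j * v j` has row sums `1`, and let `c j` be its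
column sums. One more Sinkhorn step replaces `v` by `v' j = v j / c j`. The ratios
`y i = (A v') i / (A v) i = ∑ j, T i j / c j` have total sum `n`, so `∏ i, y i ≤ 1` by AM-GM, and
`P v' ≤ P v` then forces `∏ j, c j ≥ 1`. As `∑ j, c j = n`, the equality case of AM-GM gives
`c j = 1` for all `j`.
-/

open BigOperators

/-- AM-GM for numbers of mean `1`. -/
lemma prod_le_one_of_sum_eq_card {ι : Type*} [Fintype ι] (y : ι → ℝ) (hy : ∀ i, 0 < y i)
    (hs : ∑ i, y i = Fintype.card ι) : ∏ i, y i ≤ 1 := by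
  calc ∏ i, y i ≤ ∏ i, Real.exp (y i - 1) :=
        Finset.prod_le_prod (fun i _ => (hy i).le)
          (fun i _ => by linarith [Real.add_one_le_exp (y i - 1)])
    _ = 1 := by
        rw [← Real.exp_sum, Finset.sum_sub_distrib, hs]
        simp

/-- The equality case of AM-GM for numbers of mean `1`. -/
lemma eq_one_of_one_le_prod {ι : Type*} [Fintype ι] (c : ι → ℝ) (hc : ∀ i, 0 < c i)
    (hs : ∑ i, c i = Fintype.card ι) (hp : 1 ≤ ∏ i, c i) (k : ι) : c k = 1 := by
  by_contra hk
  have hlt : ∑ i, Real.log (c i) < ∑ i, (c i - 1) :=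
    Finset.sum_lt_sum (fun i _ => Real.log_le_sub_one_of_pos (hc i))
      ⟨k, Finset.mem_univ k, Real.log_lt_sub_one_of_pos (hc k) hk⟩
  rw [← Real.log_prod (fun i _ => (hc i).ne'), Finset.sum_sub_distrib, hs] at hlt
  have := Real.log_nonneg hp
  simp at hlt
  linarith

/-- A positive `v` maximizing `(∏ j, v j) / ∏ i, (A v) i` among positive vectors; maximality is
stated with denominators cleared. -/
lemma exists_maximizer {ι : Type*} [Fintype ι] [Nonempty ι] (A : Matrix ι ι ℝ)
    (hA : ∀ i j, 0 < A i j) :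
    ∃ v : ι → ℝ, (∀ j, 0 < v j) ∧ ∀ w : ι → ℝ, (∀ j, 0 < w j) →
      (∏ j, w j) * ∏ i, ∑ j, A i j * v j ≤ (∏ j, v j) * ∏ i, ∑ j, A i j * w j := by
  classical
  have hpos : ∀ w ∈ stdSimplex ℝ ι, ∀ i, 0 < ∑ j, A i j * w j := by
    rintro w ⟨hw0, hw1⟩ i
    obtain ⟨k, -, hk⟩ : ∃ k ∈ Finset.univ, 0 < w k :=
      Finset.exists_lt_of_sum_lt (by simp [hw1])
    exact Finset.sum_pos' (fun j _ => mul_nonneg (hA i j).le (hw0 j))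
      ⟨k, Finset.mem_univ k, mul_pos (hA i k) hk⟩
  have hcont : ContinuousOn (fun w : ι → ℝ => (∏ j, w j) / ∏ i, ∑ j, A i j * w j)
      (stdSimplex ℝ ι) := by
    refine ContinuousOn.div (by fun_prop) (by fun_prop) fun w hw => ?_
    exact (Finset.prod_pos fun i _ => hpos w hw i).ne'
  have hnorm : ∀ w : ι → ℝ, (∀ j, 0 < w j) →
      (fun j => (∑ k, w k)⁻¹ * w j) ∈ stdSimplex ℝ ι := by
    intro w hw
    have hs : 0 < ∑ k, w k := Finset.sum_pos (fun j _ => hw j) Finset.univ_nonempty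
    refine ⟨fun j => (mul_pos (inv_pos.2 hs) (hw j)).le, ?_⟩
    rw [← Finset.mul_sum, inv_mul_cancel₀ hs.ne']
  obtain ⟨v, hv, hmax⟩ := (isCompact_stdSimplex ℝ ι).exists_isMaxOn
    ⟨_, hnorm 1 fun _ => one_pos⟩ hcont
  have hv0 : ∀ i, 0 < ∑ j, A i j * v j := hpos v hv
  have hmax' : ∀ w : ι → ℝ, (∀ j, 0 < w j) →
      (∏ j, w j) / (∏ i, ∑ j, A i j * w j) ≤ (∏ j, v j) / ∏ i, ∑ j, A i j * v j := by
    intro w hw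
    have hs : 0 < ∑ k, w k := Finset.sum_pos (fun j _ => hw j) Finset.univ_nonempty
    have h : (∏ j, (∑ k, w k)⁻¹ * w j) / (∏ i, ∑ j, A i j * ((∑ k, w k)⁻¹ * w j)) ≤
        (∏ j, v j) / ∏ i, ∑ j, A i j * v j := hmax (hnorm w hw)
    have hlin : ∀ i, ∑ j, A i j * ((∑ k, w k)⁻¹ * w j) = (∑ k, w k)⁻¹ * ∑ j, A i j * w j := by
      intro i
      rw [Finset.mul_sum]
      exact Finset.sum_congr rfl fun j _ => mul_left_comm _ _ _
    rwa [Finset.prod_congr rfl fun i _ => hlin i, Finset.prod_mul_distrib,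
      Finset.prod_mul_distrib,
      mul_div_mul_left _ _ (Finset.prod_pos fun _ _ => inv_pos.2 hs).ne'] at h
  have hD : 0 < ∏ i, ∑ j, A i j * v j := Finset.prod_pos fun i _ => hv0 i
  refine ⟨v, fun j => (hv.1 j).lt_of_ne' fun hj => ?_, fun w hw => ?_⟩
  · -- a vanishing entry would make the maximum `0`, less than the value at the all-ones vector
    have h := hmax' (fun _ => 1) fun _ => one_pos
    rw [Finset.prod_eq_zero (Finset.mem_univ j) hj, zero_div] at h
    refine absurd h (not_le.2 (div_pos (by simp) (Finset.prod_pos fun i _ => ?_)))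
    exact Finset.sum_pos (fun j _ => mul_pos (hA i j) one_pos) Finset.univ_nonempty
  · refine (div_le_div_iff₀ (Finset.prod_pos fun i _ => ?_) hD).1 (hmax' w hw)
    exact Finset.sum_pos (fun j _ => mul_pos (hA i j) (hw j)) Finset.univ_nonempty

/-- Sinkhorn's theorem: every square matrix with strictly positive entries admits
a doubly stochastic diagonal scaling. -/
theorem sinkhorn_scaling_exists
    (n : ℕ) (hn : 1 ≤ n) (A : Matrix (Fin n) (Fin n) ℝ)
    (hA : ∀ i j, 0 < A i j) :
    ∃ u v : Fin n → ℝ, (∀ i, 0 < u i) ∧ (∀ j, 0 < v j) ∧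
      IsDoublyStochastic (Matrix.of fun i j => u i * A i j * v j) := by
  have : Nonempty (Fin n) := ⟨⟨0, hn⟩⟩
  obtain ⟨v, hv, hmax⟩ := exists_maximizer A hA
  have hr : ∀ w : Fin n → ℝ, (∀ j, 0 < w j) → ∀ i, 0 < ∑ j, A i j * w j := fun w hw i =>
    Finset.sum_pos (fun j _ => mul_pos (hA i j) (hw j)) Finset.univ_nonempty
  set r : Fin n → ℝ := fun i => ∑ j, A i j * v j with hr_def
  have hr0 : ∀ i, 0 < r i := hr v hv
  have hT : ∀ i j, 0 < (r i)⁻¹ * A i j * v j := fun i j =>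
    mul_pos (mul_pos (inv_pos.2 (hr0 i)) (hA i j)) (hv j)
  have hrow : ∀ i, ∑ j, (r i)⁻¹ * A i j * v j = 1 := by
    intro i
    simp only [mul_assoc, ← Finset.mul_sum]
    exact inv_mul_cancel₀ (hr0 i).ne'
  set c : Fin n → ℝ := fun j => ∑ i, (r i)⁻¹ * A i j * v j with hc_def
  have hc0 : ∀ j, 0 < c j := fun j => Finset.sum_pos (fun i _ => hT i j) Finset.univ_nonempty
  have hcs : ∑ j, c j = Fintype.card (Fin n) := by
    rw [hc_def, Finset.sum_comm]
    simp [hrow]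
  have hw0 : ∀ j, 0 < v j / c j := fun j => div_pos (hv j) (hc0 j)
  have hy : ∏ i, ((∑ j, A i j * (v j / c j)) / r i) ≤ 1 := by
    refine prod_le_one_of_sum_eq_card _ (fun i => div_pos (hr _ hw0 i) (hr0 i)) ?_
    calc ∑ i, (∑ j, A i j * (v j / c j)) / r i
        = ∑ i, ∑ j, (r i)⁻¹ * A i j * v j * (c j)⁻¹ := by
          refine Finset.sum_congr rfl fun i _ => ?_
          rw [Finset.sum_div]
          exact Finset.sum_congr rfl fun j _ => by ring
      _ = ∑ j, c j * (c j)⁻¹ := by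
          rw [Finset.sum_comm]
          exact Finset.sum_congr rfl fun j _ => (Finset.sum_mul ..).symm
      _ = Fintype.card (Fin n) := by
          simp [fun j => mul_inv_cancel₀ (hc0 j).ne']
  have hR : 0 < ∏ i, r i := Finset.prod_pos fun i _ => hr0 i
  have hV : 0 < ∏ j, v j := Finset.prod_pos fun j _ => hv j
  have hC : 0 < ∏ j, c j := Finset.prod_pos fun j _ => hc0 j
  have hcp : 1 ≤ ∏ j, c j := by
    rw [Finset.prod_div_distrib, div_le_one hR] at hy
    have h := (hmax _ hw0).trans (mul_le_mul_of_nonneg_left hy hV.le)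
    rw [Finset.prod_div_distrib] at h
    have h2 := le_of_mul_le_mul_right h hR
    rw [div_le_iff₀ hC] at h2
    exact (le_mul_iff_one_le_right hV).1 h2
  exact ⟨fun i => (r i)⁻¹, v, fun i => inv_pos.2 (hr0 i), hv,
    fun i j => (hT i j).le, hrow, eq_one_of_one_le_prod c hc0 hcs hcp⟩
end

section
/- Uniqueness of the doubly stochastic scaling: let A be an n × n real matrix with all entries strictly positive, and let u, v, u', v' ∈ ℝ^n have all entries strictly positive. If both the matrix with entries u_i · A_{ij} · v_j and the matrix with entries u'_i · A_{ij} · v'_j are doubly stochastic, then the two scaled matrices are equal, and there exists a constant c > 0 with u'_i = c · u_i for all i and v'_j = v_j / c for all j. -/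
/-!
The proof is a maximum principle. Let `c = max_i u' i / u i`, attained at `i₀`, so `u' ≤ c u`.
Comparing the sums of column `j` gives `v j ≤ c v' j`. In row `i₀`, where `u' i₀ = c u i₀`,
the two row sums being equal means that `∑ j, u i₀ * A i₀ j * (c v' j - v j) = 0`; the terms are
nonnegative and the weights `u i₀ * A i₀ j` are positive, so `c v' j = v j` for every `j`.
The remaining row sums then force `u' i = c u i`.
-/

open BigOperators

/-- Uniqueness of the doubly stochastic scaling of a positive matrix: the scaled
matrix is unique and the scaling vectors are unique up to a positive constant. -/
theorem sinkhorn_scaling_unique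
    (n : ℕ) (A : Matrix (Fin n) (Fin n) ℝ) (hA : ∀ i j, 0 < A i j)
    (u v u' v' : Fin n → ℝ)
    (hu : ∀ i, 0 < u i) (hv : ∀ j, 0 < v j)
    (hu' : ∀ i, 0 < u' i) (hv' : ∀ j, 0 < v' j)
    (hds : IsDoublyStochastic (Matrix.of fun i j => u i * A i j * v j))
    (hds' : IsDoublyStochastic (Matrix.of fun i j => u' i * A i j * v' j)) :
    (∀ i j, u i * A i j * v j = u' i * A i j * v' j) ∧
    ∃ c : ℝ, 0 < c ∧ (∀ i, u' i = c * u i) ∧ (∀ j, v' j = v j / c) := by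
  obtain ⟨-, hrow, hcol⟩ := hds
  obtain ⟨-, hrow', hcol'⟩ := hds'
  simp only [Matrix.of_apply] at hrow hcol hrow' hcol'
  suffices h : ∃ c : ℝ, 0 < c ∧ (∀ i, u' i = c * u i) ∧ (∀ j, v' j = v j / c) by
    refine ⟨fun i j => ?_, h⟩
    obtain ⟨c, hc, h1, h2⟩ := h
    rw [h1, h2]
    field_simp
  rcases isEmpty_or_nonempty (Fin n) with hn | hn
  · exact ⟨1, one_pos, fun i => hn.elim i, fun j => hn.elim j⟩
  obtain ⟨i₀, hmax⟩ := Finite.exists_max fun i => u' i / u i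
  obtain ⟨c, hcdef⟩ : ∃ c, c = u' i₀ / u i₀ := ⟨_, rfl⟩
  have hc : 0 < c := hcdef ▸ div_pos (hu' i₀) (hu i₀)
  have hi₀ : u' i₀ = c * u i₀ := by
    rw [hcdef, div_mul_cancel₀ _ (hu i₀).ne']
  have hle : ∀ i, u' i ≤ c * u i := fun i => by
    rw [hcdef]
    exact (div_le_iff₀ (hu i)).1 (hmax i)
  have hvle : ∀ j, v j ≤ c * v' j := by
    intro j
    have h1 : ∑ i, u' i * A i j * v' j ≤ ∑ i, c * u i * A i j * v' j :=
      Finset.sum_le_sum fun i _ => mul_le_mul_of_nonneg_right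
        (mul_le_mul_of_nonneg_right (hle i) (hA i j).le) (hv' j).le
    have h2 : v j * ∑ i, c * u i * A i j * v' j = c * v' j * ∑ i, u i * A i j * v j := by
      simp only [Finset.mul_sum]
      exact Finset.sum_congr rfl fun i _ => by ring
    rw [hcol', ← mul_le_mul_iff_right₀ (hv j), h2, hcol] at h1
    linarith
  have hveq : ∀ j, c * v' j = v j := by
    have hsum : ∑ j, u i₀ * A i₀ j * (c * v' j - v j) = 0 := by
      have h1 := hrow' i₀
      rw [hi₀] at h1
      calc ∑ j, u i₀ * A i₀ j * (c * v' j - v j)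
          = ∑ j, c * u i₀ * A i₀ j * v' j - ∑ j, u i₀ * A i₀ j * v j := by
            rw [← Finset.sum_sub_distrib]
            exact Finset.sum_congr rfl fun j _ => by ring
        _ = 0 := by rw [h1, hrow, sub_self]
    intro j
    have h0 := (Finset.sum_eq_zero_iff_of_nonneg fun j _ =>
      mul_nonneg (mul_pos (hu i₀) (hA i₀ j)).le (sub_nonneg.2 (hvle j))).1 hsum j
        (Finset.mem_univ j)
    exact sub_eq_zero.1 ((mul_eq_zero.1 h0).resolve_left (mul_pos (hu i₀) (hA i₀ j)).ne')
  refine ⟨c, hc, fun i => ?_, fun j => ?_⟩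
  · have h : u' i * ∑ j, u i * A i j * v j = c * u i * ∑ j, u' i * A i j * v' j := by
      simp only [Finset.mul_sum, ← hveq]
      exact Finset.sum_congr rfl fun j _ => by ring
    rwa [hrow, hrow', mul_one, mul_one] at h
  · rw [← hveq j, mul_div_cancel_left₀ _ hc.ne']
end
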